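/- Let n, K, w be integers with 1 ≤ K, 0 ≤ w ≤ K/2, and n ≥ 64K, and let Z_w = {−1 + 2h/n : h = 0,…,K−w−1} ∪ {1 − 2h/n : h = 0,…,w−1}. Then for every δ ≥ 0 and every real s with 0 ≤ s ≤ 1 − w/(16K): ∏_{z∈Z_w} ((s − z)² + δ(1 − z²)) ≤ e^{65·δ·K} · ∏_{z∈Z_w} (s − z)². -/

import Mathlib

open Finset

/-- The zeros `Z_w = {-1 + 2h/n : 0 ≤ h < K - w} ∪ {1 - 2h/n : 0 ≤ h < w}`, with the
product `∏_{z ∈ Z_w} ((s - z)² + δ·(1 - z²))` taken over them. -/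
noncomputable def Pprod (n K w : ℕ) (δ s : ℝ) : ℝ :=
  (∏ h ∈ Finset.range (K - w),
      ((s - (-1 + 2 * (h : ℝ) / (n : ℝ))) ^ 2 + δ * (1 - (-1 + 2 * (h : ℝ) / (n : ℝ)) ^ 2))) *
  (∏ h ∈ Finset.range w,
      ((s - (1 - 2 * (h : ℝ) / (n : ℝ))) ^ 2 + δ * (1 - (1 - 2 * (h : ℝ) / (n : ℝ)) ^ 2)))


lemma aux_term (A B c δ : ℝ) (hδ : 0 ≤ δ) (hA : 0 ≤ A) (h : B ≤ c * A) :
    A + δ * B ≤ Real.exp (δ * c) * A := by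
  have h1 := Real.add_one_le_exp (δ * c)
  have h2 := mul_le_mul_of_nonneg_right h1 hA
  have h3 := mul_le_mul_of_nonneg_left h hδ
  nlinarith

lemma aux_prod (m : ℕ) (e : ℝ) (f g : ℕ → ℝ) (hf : ∀ h ∈ range m, 0 ≤ f h)
    (hfg : ∀ h ∈ range m, f h ≤ e * g h) :
    ∏ h ∈ range m, f h ≤ e ^ m * ∏ h ∈ range m, g h := by
  calc _ ≤ ∏ h ∈ range m, (e * g h) := Finset.prod_le_prod hf hfg
    _ = _ := by rw [Finset.prod_mul_distrib]; simp

theorem stmt15 (n K w : ℕ) (hK : 1 ≤ K) (hw : 2 * w ≤ K) (hn : 64 * K ≤ n)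
    (δ : ℝ) (hδ : 0 ≤ δ) (s : ℝ) (hs0 : 0 ≤ s) (hs1 : s ≤ 1 - (w : ℝ) / (16 * K)) :
    Pprod n K w δ s ≤ Real.exp (65 * δ * K) * Pprod n K w 0 s := by
  have hK' : (1 : ℝ) ≤ K := by exact_mod_cast hK
  have hn' : 64 * (K : ℝ) ≤ n := by exact_mod_cast hn
  have hn0 : (0 : ℝ) < n := by linarith
  have hwK : 2 * (w : ℝ) ≤ K := by exact_mod_cast hw
  have hwK' : w ≤ K := by omega
  have key : ∀ h m : ℕ, h ≤ m → 0 ≤ 2 * (h : ℝ) / n ∧ 2 * (h : ℝ) / n ≤ (m : ℝ) / (32 * K) := by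
    intro h m hh
    have hh' : (h : ℝ) ≤ m := by exact_mod_cast hh
    have : (0 : ℝ) ≤ h := by positivity
    refine ⟨by positivity, ?_⟩
    rw [div_le_div_iff₀ hn0 (by positivity)]
    nlinarith
  have one : (K : ℝ) / (32 * K) = 1 / 32 := by field_simp
  have keyK : ∀ h : ℕ, h ≤ K → 0 ≤ 2 * (h : ℝ) / n ∧ 2 * (h : ℝ) / n ≤ 1 / 32 := by
    intro h hh
    have := key h K hh
    rwa [one] at this
  have hL := aux_prod (K - w) (Real.exp (δ * 1))
    (fun h => (s - (-1 + 2 * (h : ℝ) / (n : ℝ))) ^ 2 + δ * (1 - (-1 + 2 * (h : ℝ) / (n : ℝ)) ^ 2))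
    (fun h => (s - (-1 + 2 * (h : ℝ) / (n : ℝ))) ^ 2)
    (by
      intro h hh
      obtain ⟨h1, h2⟩ := keyK h (by have := mem_range.1 hh; omega)
      have : 0 ≤ 1 - (-1 + 2 * (h : ℝ) / (n : ℝ)) ^ 2 := by nlinarith
      positivity)
    (by
      intro h hh
      obtain ⟨h1, h2⟩ := keyK h (by have := mem_range.1 hh; omega)
      apply aux_term _ _ _ _ hδ (sq_nonneg _)
      nlinarith)
  have hR := aux_prod w (Real.exp (δ * (64 * K / w)))
    (fun h => (s - (1 - 2 * (h : ℝ) / (n : ℝ))) ^ 2 + δ * (1 - (1 - 2 * (h : ℝ) / (n : ℝ)) ^ 2))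
    (fun h => (s - (1 - 2 * (h : ℝ) / (n : ℝ))) ^ 2)
    (by
      intro h hh
      obtain ⟨h1, h2⟩ := keyK h (by have := mem_range.1 hh; omega)
      have : 0 ≤ 1 - (1 - 2 * (h : ℝ) / (n : ℝ)) ^ 2 := by nlinarith
      positivity)
    (by
      intro h hh
      have hh' := mem_range.1 hh
      have hw0 : (0 : ℝ) < w := by exact_mod_cast (by omega : 0 < w)
      obtain ⟨h1, h2⟩ := key h w hh'.le
      apply aux_term _ _ _ _ hδ (sq_nonneg _)
      set t := 2 * (h : ℝ) / n
      have hr : (w : ℝ) / (16 * K) = 2 * (w / (32 * K)) := by field_simp; norm_num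
      rw [hr] at hs1
      have hc : 64 * (K : ℝ) / w = 2 / (w / (32 * K)) := by field_simp; norm_num
      rw [hc]
      have hr0 : (0 : ℝ) < w / (32 * K) := by positivity
      set r := (w : ℝ) / (32 * K)
      have h3 : r ^ 2 ≤ (s - (1 - t)) ^ 2 := by nlinarith
      calc 1 - (1 - t) ^ 2 ≤ 2 * r := by nlinarith
        _ = 2 / r * r ^ 2 := by field_simp
        _ ≤ _ := by gcongr)
  have eL : Real.exp (δ * 1) ^ (K - w) ≤ Real.exp (δ * K) := by
    rw [← Real.exp_nat_mul, Real.exp_le_exp, Nat.cast_sub hwK']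
    have : (0 : ℝ) ≤ w := by positivity
    nlinarith
  have eR : Real.exp (δ * (64 * K / w)) ^ w ≤ Real.exp (δ * (64 * K)) := by
    rw [← Real.exp_nat_mul, Real.exp_le_exp]
    rcases Nat.eq_zero_or_pos w with h | h
    · subst h; simp; positivity
    · have : (0 : ℝ) < w := by exact_mod_cast h
      apply le_of_eq; field_simp
  have hE : Real.exp (65 * δ * K) = Real.exp (δ * K) * Real.exp (δ * (64 * K)) := by
    rw [← Real.exp_add]; ring_nf
  have pL : 0 ≤ ∏ h ∈ range (K - w), (s - (-1 + 2 * (h : ℝ) / (n : ℝ))) ^ 2 :=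
    prod_nonneg fun _ _ => sq_nonneg _
  have pR : 0 ≤ ∏ h ∈ range w, (s - (1 - 2 * (h : ℝ) / (n : ℝ))) ^ 2 :=
    prod_nonneg fun _ _ => sq_nonneg _
  have hL' := hL.trans (mul_le_mul_of_nonneg_right eL pL)
  have hR' := hR.trans (mul_le_mul_of_nonneg_right eR pR)
  unfold Pprod
  simp only [zero_mul, add_zero]
  rw [hE, mul_mul_mul_comm]
  refine mul_le_mul hL' hR' ?_ (by positivity)
  refine prod_nonneg fun h hh => ?_
  obtain ⟨h1, h2⟩ := keyK h (by have := mem_range.1 hh; omega)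
  have : 0 ≤ 1 - (1 - 2 * (h : ℝ) / (n : ℝ)) ^ 2 := by nlinarith
  positivity
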